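/- Let 𝓕 be a family of subsets of a set U whose shatter function satisfies π_𝓕(m) = o(m^k) for some integer k (i.e., there is a function h : ℕ → ℝ with π_𝓕(m) ≤ h(m) for all m and h(m)/m^k → 0 as m → ∞), and let p ≥ k. Then there is a constant N such that the following holds for every finite set V ⊆ U: if for every V' ⊆ V with |V'| ≤ p there is some F ∈ 𝓕 with V' ⊆ F, then there is a subfamily 𝓕' ⊆ 𝓕 with |𝓕'| ≤ N and V ⊆ ⋃ 𝓕'. -/

import Mathlib

open Filter

/-!
Only one consequence of `π_𝓕(m) = o(m ^ k)` matters: `π_𝓕(k * n) < n ^ k` for some `n`.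

*Fractional step.* Choose `n` random points of `V` in each of `k` groups. Each of the `n ^ k`
transversals of the groups lies in a member of `𝓕`, and two of these members have the same trace
on the sample, so one of them contains a sampled point outside its own transversal. That point is
independent of the transversal, so, after averaging, some member of `𝓕` contains a fraction of `V`
depending only on `k` and `n`. The same holds for every weighting of `V`, and multiplicative
weights turn this into a finite list of members of `𝓕` such that every point of `V` lies in a
constant fraction of the list.

*Rounding step.* As `n ^ k ≤ 2 ^ (k * n)`, the dual of `𝓕` has bounded VC dimension, so the
`ε`-net theorem extracts boundedly many members of the list that still cover `V`. The net comes
from double sampling: if every `x : Fin m → X` misses a range, then the number of points of a second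
independent sample in the range missed by the first has a large exponential moment, whereas
exchanging the two samples coordinatewise at random bounds this moment by the number of traces on
`2 * m` points, which is polynomial in `m`.
-/

section Trace

open Finset

variable {U : Type*}

/-- The trace `{F ∩ A : F ∈ 𝓕}` of a set family on a finite set; its largest cardinality over
`#A ≤ m` is the shatter function of `𝓕` at `m`. -/
def traceOn (𝓕 : Set (Set U)) (A : Finset U) : Set (Set U) :=
  (fun F => F ∩ (A : Set U)) '' 𝓕

theorem finite_traceOn (𝓕 : Set (Set U)) (A : Finset U) : (traceOn 𝓕 A).Finite :=
  A.finite_toSet.powerset.subset (Set.image_subset_iff.2 fun _ _ => Set.inter_subset_right)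

theorem exists_ne_inter_eq_of_ncard_traceOn_lt {𝓕 : Set (Set U)} {A : Finset U} {ι : Type*}
    [Fintype ι] (hA : (traceOn 𝓕 A).ncard < Fintype.card ι) {Φ : ι → Set U}
    (hΦ : ∀ i, Φ i ∈ 𝓕) :
    ∃ i j, i ≠ j ∧ Φ i ∩ A = Φ j ∩ A := by
  rw [Set.ncard_eq_toFinset_card _ (finite_traceOn 𝓕 A), ← card_univ] at hA
  obtain ⟨i, -, j, -, hij, heq⟩ := exists_ne_map_eq_of_card_lt_of_maps_to hA
    (f := fun i => Φ i ∩ (A : Set U)) fun i _ => by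
      simpa [traceOn] using Set.mem_image_of_mem _ (hΦ i)
  exact ⟨i, j, hij, heq⟩

end Trace

section FractionalStep

open Finset

variable {U : Type*}

theorem exists_mem_off_transversal {𝓕 : Set (Set U)} {k n : ℕ}
    (h𝓕 : ∀ A : Finset U, #A ≤ k * n → (traceOn 𝓕 A).ncard < n ^ k)
    (z : Fin k × Fin n → U) {Φ : (Fin k → Fin n) → Set U} (hΦ : ∀ f, Φ f ∈ 𝓕)
    (hz : ∀ f j, z (j, f j) ∈ Φ f) :
    ∃ f j a, a ≠ f j ∧ z (j, a) ∈ Φ f := by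
  classical
  have hcard : #(univ.image z) ≤ k * n := card_image_le.trans (by simp)
  obtain ⟨f, g, hfg, heq⟩ := exists_ne_inter_eq_of_ncard_traceOn_lt
    ((h𝓕 _ hcard).trans_eq (by simp)) hΦ
  obtain ⟨j, hj⟩ := Function.ne_iff.1 hfg
  have hmem : z (j, g j) ∈ Φ g ∩ (univ.image z : Finset U) := ⟨hz g j, by simp⟩
  rw [← heq] at hmem
  exact ⟨f, j, g j, hj.symm, hmem.1⟩

theorem card_mul_card_apply_mem_le {Y ι : Type*} [Fintype Y] [DecidableEq Y] [Fintype ι]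
    [DecidableEq ι] (p : Y) (Ψ : (Y → ι) → Finset ι)
    (hΨ : ∀ v t, Ψ (Function.update v p t) = Ψ v) {δ : ℕ} (hδ : ∀ v, #(Ψ v) ≤ δ) :
    Fintype.card ι * #{v : Y → ι | v p ∈ Ψ v} ≤ δ * Fintype.card (Y → ι) := by
  have hinv : Function.Involutive
      fun q : ι × (Y → ι) => (q.2 p, Function.update q.2 p q.1) := fun q => by simp
  calc Fintype.card ι * #{v : Y → ι | v p ∈ Ψ v}
      = ∑ _t : ι, ∑ v : Y → ι, if v p ∈ Ψ v then 1 else 0 := by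
        rw [sum_const, card_univ, smul_eq_mul, card_filter]
    _ = ∑ q : ι × (Y → ι), if q.2 p ∈ Ψ q.2 then 1 else 0 :=
        (Fintype.sum_prod_type' fun _ v => if v p ∈ Ψ v then 1 else 0).symm
    _ = ∑ q : ι × (Y → ι), if q.1 ∈ Ψ q.2 then 1 else 0 :=
        Fintype.sum_equiv hinv.toPerm _ _ fun q => by simp [hΨ]
    _ = ∑ v, #(Ψ v) := by
        rw [Fintype.sum_prod_type_right]
        exact sum_congr rfl fun v _ => by simp
    _ ≤ δ * Fintype.card (Y → ι) := by
        rw [mul_comm, ← card_univ, ← smul_eq_mul]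
        exact sum_le_card_nsmul _ _ _ fun v _ => hδ v

open scoped Classical in
theorem exists_card_le_mul_card_preimage {𝓕 : Set (Set U)} {k n : ℕ}
    (h𝓕 : ∀ A : Finset U, #A ≤ k * n → (traceOn 𝓕 A).ncard < n ^ k)
    {ι : Type*} [Fintype ι] [Nonempty ι] (u : ι → U)
    (hu : ∀ e : Fin k → ι, ∃ F ∈ 𝓕, ∀ j, u (e j) ∈ F) :
    ∃ F ∈ 𝓕, Fintype.card ι ≤ n ^ k * (k * n) * #{t | u t ∈ F} := by
  choose Φ hΦ hmem using hu
  obtain ⟨e₀, hmax⟩ := Finite.exists_max fun e => #{t | u t ∈ Φ e}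
  refine ⟨Φ e₀, hΦ e₀, ?_⟩
  set δ := #{t | u t ∈ Φ e₀}
  let offPairs : Finset ((Fin k → Fin n) × (Fin k × Fin n)) := {q | q.2.2 ≠ q.1 q.2.1}
  let hit (q : (Fin k → Fin n) × (Fin k × Fin n)) : Finset (Fin k × Fin n → ι) :=
    {v | u (v q.2) ∈ Φ fun j => v (j, q.1 j)}
  have hcover : univ ⊆ offPairs.biUnion hit := fun v _ => by
    obtain ⟨f, j, a, ha, hv⟩ := exists_mem_off_transversal h𝓕 (fun y => u (v y))
      (fun f => hΦ fun j => v (j, f j)) fun f j => hmem _ j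
    exact mem_biUnion.2 ⟨(f, j, a), by simpa [offPairs] using ha, by simpa [hit] using hv⟩
  have hhit : ∀ q ∈ offPairs,
      Fintype.card ι * #(hit q) ≤ δ * Fintype.card (Fin k × Fin n → ι) := by
    rintro ⟨f, p⟩ hp
    have hne : ∀ j, (j, f j) ≠ p := by
      rintro j rfl
      simp [offPairs] at hp
    simpa [hit] using card_mul_card_apply_mem_le p
      (fun v : Fin k × Fin n → ι => {t | u t ∈ Φ fun j => v (j, f j)})
      (fun v t => by simp [hne]) fun v => hmax _
  have hpairs : #offPairs ≤ n ^ k * (k * n) := (card_filter_le _ _).trans (by simp)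
  refine Nat.le_of_mul_le_mul_right ?_ (Fintype.card_pos (α := Fin k × Fin n → ι))
  calc Fintype.card ι * Fintype.card (Fin k × Fin n → ι)
      ≤ Fintype.card ι * ∑ q ∈ offPairs, #(hit q) :=
        Nat.mul_le_mul_left _ ((card_le_card hcover).trans card_biUnion_le)
    _ ≤ #offPairs * (δ * Fintype.card (Fin k × Fin n → ι)) := by
        rw [mul_sum]
        exact sum_le_card_nsmul _ _ _ hhit
    _ ≤ n ^ k * (k * n) * δ * Fintype.card (Fin k × Fin n → ι) := by
        rw [mul_assoc _ δ]
        exact Nat.mul_le_mul_right _ hpairs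

open scoped Classical in
theorem exists_sum_le_mul_sum_filter_mem {𝓕 : Set (Set U)} {k n : ℕ}
    (h𝓕 : ∀ A : Finset U, #A ≤ k * n → (traceOn 𝓕 A).ncard < n ^ k) {V : Finset U}
    (hV : ∀ V' ⊆ V, #V' ≤ k → ∃ F ∈ 𝓕, (V' : Set U) ⊆ F) (w : U → ℕ) :
    ∃ F ∈ 𝓕, ∑ v ∈ V, w v ≤ n ^ k * (k * n) * ∑ v ∈ V with v ∈ F, w v := by
  -- Replace each point `v` by `w v` copies of itself.
  let Copies := Σ v : V, Fin (w v)
  have hcard : Fintype.card Copies = ∑ v ∈ V, w v := by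
    simp only [Copies, Fintype.card_sigma, Fintype.card_fin]
    exact sum_coe_sort V w
  have hcard_mem (F : Set U) :
      #{t : Copies | (t.1 : U) ∈ F} = ∑ v ∈ V with v ∈ F, w v := by
    rw [card_filter, Fintype.sum_sigma, sum_filter, ← sum_coe_sort V]
    refine sum_congr rfl fun v _ => ?_
    split_ifs <;> simp
  rcases isEmpty_or_nonempty Copies with hempty | hnonempty
  · obtain ⟨F, hF, -⟩ := hV ∅ (empty_subset V) (by simp)
    exact ⟨F, hF, by simp [← hcard]⟩
  · obtain ⟨F, hF, hle⟩ := exists_card_le_mul_card_preimage h𝓕 (fun t : Copies => (t.1 : U))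
      fun e => by
        obtain ⟨F, hF, hsub⟩ := hV (univ.image fun j => ((e j).1 : U))
          (image_subset_iff.2 fun j _ => (e j).1.2) (card_image_le.trans (by simp))
        exact ⟨F, hF, fun j => hsub (by simp)⟩
    exact ⟨F, hF, by rwa [hcard, hcard_mem] at hle⟩

end FractionalStep

theorem exists_pos_mul_pow_mul_pow_lt_pow (C D : ℕ) {a b : ℕ} (hab : a < b) :
    ∃ m, 0 < m ∧ C * m ^ D * a ^ m < b ^ m := by
  have hlittle := isLittleO_pow_const_mul_const_pow_const_pow_of_norm_lt (R := ℝ) D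
    (r₁ := a) (r₂ := b) (by simpa using hab)
  obtain ⟨m, hm, hpos⟩ := ((hlittle.bound (c := 1 / (C + 1)) (by positivity)).and
    (eventually_gt_atTop 0)).exists
  refine ⟨m, hpos, ?_⟩
  have hb : (0 : ℝ) < (b : ℝ) ^ m := pow_pos (by exact_mod_cast a.zero_le.trans_lt hab) m
  rw [Real.norm_of_nonneg (by positivity), Real.norm_of_nonneg hb.le, one_div,
    le_inv_mul_iff₀ (by positivity)] at hm
  rcases Nat.eq_zero_or_pos (m ^ D * a ^ m) with hzero | hne
  · rw [mul_assoc, hzero, mul_zero]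
    exact_mod_cast hb
  · have hm' : (C + 1) * (m ^ D * a ^ m) ≤ b ^ m := by exact_mod_cast hm
    linarith

section MultiplicativeWeights

open Finset

variable {U : Type*}

open scoped Classical in
theorem exists_fin_sum_two_pow_card_notMem_le {𝓕 : Set (Set U)} {V : Finset U} {B : ℕ}
    (h𝓕 : ∀ w : U → ℕ, ∃ F ∈ 𝓕, ∑ v ∈ V, w v ≤ B * ∑ v ∈ V with v ∈ F, w v) (T : ℕ) :
    ∃ G : Fin T → Set U, (∀ t, G t ∈ 𝓕) ∧
      (B + 1) ^ T * ∑ v ∈ V, 2 ^ #{t | v ∉ G t} ≤ #V * (2 * B + 1) ^ T := by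
  induction T with
  | zero => exact ⟨Fin.elim0, fun t => t.elim0, by simp⟩
  | succ T ih =>
    obtain ⟨G, hG, hle⟩ := ih
    obtain ⟨F, hF, hFw⟩ := h𝓕 fun v => 2 ^ #{t | v ∉ G t}
    refine ⟨Fin.cons F G, Fin.cases hF hG, ?_⟩
    have hupdate : ∑ v ∈ V, 2 ^ #{t | v ∉ (Fin.cons F G : Fin (T + 1) → Set U) t} +
        ∑ v ∈ V with v ∈ F, 2 ^ #{t | v ∉ G t} = 2 * ∑ v ∈ V, 2 ^ #{t | v ∉ G t} := by
      rw [sum_filter, mul_sum, ← sum_add_distrib]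
      refine sum_congr rfl fun v _ => ?_
      rw [Fin.card_filter_univ_succ]
      by_cases hv : v ∈ F
      · simp [hv, two_mul]
      · simp [hv, pow_succ, mul_comm]
    set W := ∑ v ∈ V, 2 ^ #{t | v ∉ G t}
    set W' := ∑ v ∈ V, 2 ^ #{t | v ∉ (Fin.cons F G : Fin (T + 1) → Set U) t}
    set WF := ∑ v ∈ V with v ∈ F, 2 ^ #{t | v ∉ G t}
    have hscaled : (B + 1) * W' + (B + 1) * WF = 2 * (B + 1) * W := by
      rw [← mul_add, hupdate]
      ring
    have hstep : (B + 1) * W' ≤ (2 * B + 1) * W := by linarith [Nat.zero_le WF]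
    calc (B + 1) ^ (T + 1) * W' = (B + 1) ^ T * ((B + 1) * W') := by ring
      _ ≤ (B + 1) ^ T * ((2 * B + 1) * W) := Nat.mul_le_mul_left _ hstep
      _ = (2 * B + 1) * ((B + 1) ^ T * W) := by ring
      _ ≤ (2 * B + 1) * (#V * (2 * B + 1) ^ T) := Nat.mul_le_mul_left _ hle
      _ = #V * (2 * B + 1) ^ (T + 1) := by ring

open scoped Classical in
theorem exists_fractional_cover (B : ℕ) :
    ∃ c : ℕ, ∀ {U : Type*} {𝓕 : Set (Set U)} {V : Finset U},
      (∀ w : U → ℕ, ∃ F ∈ 𝓕, ∑ v ∈ V, w v ≤ B * ∑ v ∈ V with v ∈ F, w v) →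
      ∃ T > 0, ∃ G : Fin T → Set U, (∀ t, G t ∈ 𝓕) ∧ ∀ v ∈ V, T ≤ c * #{t | v ∈ G t} := by
  obtain ⟨c, hc, hlt⟩ := exists_pos_mul_pow_mul_pow_lt_pow 4 0
    (show 2 * B + 1 < 2 * (B + 1) by lia)
  rw [pow_zero, mul_one] at hlt
  refine ⟨c, fun {U 𝓕 V} h𝓕 => ?_⟩
  obtain ⟨G, hG, hle⟩ := exists_fin_sum_two_pow_card_notMem_le h𝓕 (c * (#V + 1))
  refine ⟨c * (#V + 1), by positivity, G, hG, fun v hv => Nat.mul_le_mul_left c ?_⟩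
  by_contra! hfew
  have hsplit : #{t | v ∈ G t} + #{t | v ∉ G t} = c * (#V + 1) := by
    rw [card_filter_add_card_filter_not, card_univ, Fintype.card_fin]
  have hv_le : 2 ^ #{t | v ∉ G t} ≤ ∑ v ∈ V, 2 ^ #{t | v ∉ G t} :=
    single_le_sum_of_canonicallyOrdered (f := fun v => 2 ^ #{t | v ∉ G t}) hv
  refine lt_irrefl ((2 * (B + 1)) ^ (c * (#V + 1))) ?_
  calc (2 * (B + 1)) ^ (c * (#V + 1))
      = 2 ^ #{t | v ∈ G t} * ((B + 1) ^ (c * (#V + 1)) * 2 ^ #{t | v ∉ G t}) := by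
        have htwo : 2 ^ (c * (#V + 1)) = 2 ^ #{t | v ∈ G t} * 2 ^ #{t | v ∉ G t} := by
          rw [← pow_add, hsplit]
        rw [mul_pow, htwo]
        ring
    _ ≤ 2 ^ #V * (#V * (2 * B + 1) ^ (c * (#V + 1))) := by
        exact Nat.mul_le_mul (Nat.pow_le_pow_right two_pos (Nat.le_of_lt_succ hfew))
          ((Nat.mul_le_mul_left _ hv_le).trans hle)
    _ ≤ 2 ^ #V * (2 ^ #V * (2 * B + 1) ^ (c * (#V + 1))) := by
        gcongr
        exact Nat.lt_two_pow_self.le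
    _ = 4 ^ #V * (2 * B + 1) ^ (c * (#V + 1)) := by
        rw [← mul_assoc, ← mul_pow]
        norm_num
    _ ≤ 4 ^ (#V + 1) * (2 * B + 1) ^ (c * (#V + 1)) := by
        gcongr <;> lia
    _ = (4 * (2 * B + 1) ^ c) ^ (#V + 1) := by rw [mul_pow, ← pow_mul]
    _ < ((2 * (B + 1)) ^ c) ^ (#V + 1) := Nat.pow_lt_pow_left hlt (by lia)
    _ = (2 * (B + 1)) ^ (c * (#V + 1)) := by rw [pow_mul]

end MultiplicativeWeights

section VCDimension

open Finset

theorem card_le_of_vcDim_le {α : Type*} [Fintype α] [DecidableEq α] [Nonempty α]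
    {𝒜 : Finset (Finset α)} {D : ℕ} (h𝒜 : 𝒜.vcDim ≤ D) :
    #𝒜 ≤ (D + 1) * Fintype.card α ^ D := by
  calc #𝒜 ≤ ∑ i ∈ Iic 𝒜.vcDim, (Fintype.card α).choose i :=
        (card_le_card_shatterer 𝒜).trans card_shatterer_le_sum_vcDim
    _ ≤ ∑ i ∈ Iic D, (Fintype.card α).choose i :=
        sum_le_sum_of_subset (Iic_subset_Iic.2 h𝒜)
    _ ≤ #(Iic D) • Fintype.card α ^ D :=
        sum_le_card_nsmul _ _ _ fun i hi => (Nat.choose_le_pow _ _).trans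
          (Nat.pow_le_pow_right Fintype.card_pos (mem_Iic.1 hi))
    _ = (D + 1) * Fintype.card α ^ D := by rw [Nat.card_Iic, smul_eq_mul]

/-- The preimages of the members of `𝒜` under `z`, that is, the trace of `𝒜` on a sample `z` whose
points may be repeated. -/
def pullback {X Y : Type*} [DecidableEq X] [Fintype Y] [DecidableEq Y] (z : Y → X)
    (𝒜 : Finset (Finset X)) : Finset (Finset Y) :=
  𝒜.image fun A => ({y | z y ∈ A} : Finset Y)

theorem vcDim_pullback_le {X Y : Type*} [DecidableEq X] [Fintype Y] [DecidableEq Y] (z : Y → X)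
    (𝒜 : Finset (Finset X)) : (pullback z 𝒜).vcDim ≤ 𝒜.vcDim := by
  refine Finset.sup_le fun s hs => ?_
  have hshatter (t : Finset Y) (ht : t ⊆ s) : ∃ A ∈ 𝒜, ∀ y ∈ s, z y ∈ A ↔ y ∈ t := by
    obtain ⟨_, hA, hAt⟩ := mem_shatterer.1 hs ht
    obtain ⟨A, hA𝒜, rfl⟩ := mem_image.1 hA
    exact ⟨A, hA𝒜, fun y hy => by simp [← hAt, hy]⟩
  have hinj : Set.InjOn z s := fun y hy y' hy' heq => by
    obtain ⟨A, -, hA⟩ := hshatter {y} (singleton_subset_iff.2 hy)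
    have hy'A : z y' ∈ A := heq ▸ (hA y hy).2 (mem_singleton_self y)
    exact (mem_singleton.1 ((hA y' hy').1 hy'A)).symm
  rw [← card_image_of_injOn hinj]
  refine Shatters.card_le_vcDim fun t ht => ?_
  obtain ⟨A, hA𝒜, hA⟩ := hshatter {y ∈ s | z y ∈ t} (filter_subset _ _)
  refine ⟨A, hA𝒜, ?_⟩
  ext x
  rw [mem_inter]
  refine ⟨?_, fun hx => ?_⟩
  · rintro ⟨hx, hxA⟩
    obtain ⟨y, hy, rfl⟩ := mem_image.1 hx
    exact (mem_filter.1 ((hA y hy).1 hxA)).2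
  · obtain ⟨y, hy, rfl⟩ := mem_image.1 (ht hx)
    exact ⟨ht hx, (hA y hy).2 (mem_filter.2 ⟨hy, hx⟩)⟩

open scoped Classical in
/-- The dual set system of the sets `G y`: its members are the sets of all indices `y` with
`v ∈ G y`, one for each `v ∈ V`. -/
noncomputable def dualSystem {U Y : Type*} [Fintype Y] [DecidableEq Y] (G : Y → Set U)
    (V : Finset U) : Finset (Finset Y) :=
  V.image fun v => ({y | v ∈ G y} : Finset Y)

theorem vcDim_dualSystem_le {U Y : Type*} [Fintype Y] [DecidableEq Y] {𝓕 : Set (Set U)} {d : ℕ}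
    (h𝓕 : ∀ A : Finset U, #A ≤ d → (traceOn 𝓕 A).ncard < 2 ^ d) {G : Y → Set U}
    (hG : ∀ y, G y ∈ 𝓕) (V : Finset U) :
    (dualSystem G V).vcDim ≤ 2 ^ d := by
  classical
  refine Finset.sup_le fun s hs => ?_
  by_contra! hlt
  obtain ⟨g⟩ : Nonempty (Finset (Fin d) ↪ s) :=
    Function.Embedding.nonempty_of_card_le (by simpa using hlt.le)
  have hpoint (j : Fin d) : ∃ v, ∀ S, v ∈ G (g S) ↔ j ∈ S := by
    obtain ⟨_, ha, hst⟩ := mem_shatterer.1 hs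
      (t := ({S | j ∈ S} : Finset (Finset (Fin d))).image fun S => (g S : Y))
      (image_subset_iff.2 fun S _ => (g S).2)
    obtain ⟨v, -, rfl⟩ := mem_image.1 ha
    exact ⟨v, fun S => by simpa using Finset.ext_iff.1 hst (g S)⟩
  choose v hv using hpoint
  obtain ⟨S, S', hne, heq⟩ := exists_ne_inter_eq_of_ncard_traceOn_lt
    ((h𝓕 (univ.image v) (card_image_le.trans (by simp))).trans_eq (by simp))
    fun S : Finset (Fin d) => hG (g S)
  refine hne (Finset.ext fun j => ?_)
  rw [← hv j S, ← hv j S']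
  simpa using Set.ext_iff.1 heq (v j)

end VCDimension

section EpsilonNet

open Finset

theorem sum_two_pow_card_apply_mem {X : Type*} [Fintype X] [DecidableEq X] (A : Finset X)
    (m : ℕ) :
    ∑ y : Fin m → X, 2 ^ #{i | y i ∈ A} = (Fintype.card X + #A) ^ m := by
  have hsum : ∑ t : X, (if t ∈ A then 2 else 1) = Fintype.card X + #A := by
    calc ∑ t : X, (if t ∈ A then 2 else 1) = ∑ t : X, (1 + if t ∈ A then 1 else 0) :=
          sum_congr rfl fun t _ => by split_ifs <;> rfl
      _ = Fintype.card X + #A := by simp [sum_add_distrib]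
  rw [← hsum, Fintype.sum_pow]
  exact sum_congr rfl fun y _ => by simp [prod_ite]

theorem sum_filter_two_pow_card_flip_mem_le {ι : Type*} [Fintype ι] [DecidableEq ι]
    (s : Finset (ι × Bool)) :
    ∑ σ : ι → Bool with ∀ i, (i, σ i) ∉ s, 2 ^ #{i | (i, !σ i) ∈ s} ≤ 2 ^ Fintype.card ι := by
  let weight (i : ι) (b : Bool) : ℕ :=
    if (i, b) ∉ s then if (i, !b) ∈ s then 2 else 1 else 0
  have hweight (i : ι) : ∑ b, weight i b ≤ 2 := by
    by_cases htrue : (i, true) ∈ s <;> by_cases hfalse : (i, false) ∈ s <;>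
      simp [weight, htrue, hfalse]
  calc ∑ σ : ι → Bool with ∀ i, (i, σ i) ∉ s, 2 ^ #{i | (i, !σ i) ∈ s}
      = ∑ σ : ι → Bool, ∏ i, weight i (σ i) := by
        rw [sum_filter]
        refine sum_congr rfl fun σ _ => ?_
        rw [prod_ite_zero]
        simp [prod_ite]
    _ = ∏ i, ∑ b, weight i b := (Fintype.prod_sum weight).symm
    _ ≤ ∏ _i : ι, 2 := prod_le_prod' fun i _ => hweight i
    _ = 2 ^ Fintype.card ι := by simp

theorem sum_two_pow_card_flip_mem_le {ι : Type*} [Fintype ι] [DecidableEq ι]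
    {𝒯 : Finset (Finset (ι × Bool))} {s : (ι → Bool) → Finset (ι × Bool)} (hs : ∀ σ, s σ ∈ 𝒯)
    (hmiss : ∀ σ i, (i, σ i) ∉ s σ) :
    ∑ σ, 2 ^ #{i | (i, !σ i) ∈ s σ} ≤ #𝒯 * 2 ^ Fintype.card ι := by
  calc ∑ σ, 2 ^ #{i | (i, !σ i) ∈ s σ}
      ≤ ∑ σ : ι → Bool, ∑ t ∈ 𝒯 with ∀ i, (i, σ i) ∉ t, 2 ^ #{i | (i, !σ i) ∈ t} :=
        sum_le_sum fun σ _ => single_le_sum_of_canonicallyOrdered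
          (f := fun t : Finset (ι × Bool) => 2 ^ #{i | (i, !σ i) ∈ t})
          (mem_filter.2 ⟨hs σ, hmiss σ⟩)
    _ = ∑ t ∈ 𝒯, ∑ σ : ι → Bool with ∀ i, (i, σ i) ∉ t, 2 ^ #{i | (i, !σ i) ∈ t} := by
        simp only [sum_filter]
        exact sum_comm
    _ ≤ #𝒯 • 2 ^ Fintype.card ι :=
        sum_le_card_nsmul _ _ _ fun t _ => sum_filter_two_pow_card_flip_mem_le t

/-- Splits a sample indexed by `ι × Bool` into its values along the graph of `σ` and those along
the complementary graph, so that `σ` runs over the coordinatewise exchanges of two samples. -/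
def splitAlong {ι X : Type*} (σ : ι → Bool) : (ι × Bool → X) ≃ (ι → X) × (ι → X) where
  toFun z := (fun i => z (i, σ i), fun i => z (i, !σ i))
  invFun q y := if y.2 = σ y.1 then q.1 y.1 else q.2 y.1
  left_inv z := by
    funext ⟨i, b⟩
    by_cases hb : b = σ i
    · simp [hb]
    · simp [Bool.eq_not_of_ne hb]
  right_inv q := by simp

theorem sum_sum_two_pow_card_apply_mem_le {ι X : Type*} [Fintype ι] [DecidableEq ι] [Fintype X]
    [DecidableEq X] {M : ℕ} {𝒜 : Finset (Finset X)}
    (h𝒜 : ∀ z : ι × Bool → X, #(pullback z 𝒜) ≤ M)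
    {A : (ι → X) → Finset X} (hA : ∀ x, A x ∈ 𝒜) (hmiss : ∀ x i, x i ∉ A x) :
    ∑ x : ι → X, ∑ y : ι → X, 2 ^ #{i | y i ∈ A x} ≤
      M * (Fintype.card (ι → X) * Fintype.card (ι → X)) := by
  let caught (q : (ι → X) × (ι → X)) : ℕ := 2 ^ #{i | q.2 i ∈ A q.1}
  have hswap (z : ι × Bool → X) :
      ∑ σ, caught (splitAlong σ z) ≤ M * 2 ^ Fintype.card ι := by
    have hbound := sum_two_pow_card_flip_mem_le
      (𝒯 := pullback z 𝒜) (s := fun σ => {p | z p ∈ A fun i => z (i, σ i)})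
      (fun σ => mem_image_of_mem _ (hA fun i => z (i, σ i)))
      (fun σ i => by simpa using hmiss (fun i => z (i, σ i)) i)
    refine le_trans (le_of_eq ?_) (hbound.trans (Nat.mul_le_mul_right _ (h𝒜 z)))
    simp [caught, splitAlong]
  refine Nat.le_of_mul_le_mul_left ?_ (Nat.two_pow_pos (Fintype.card ι))
  calc 2 ^ Fintype.card ι * ∑ x : ι → X, ∑ y : ι → X, 2 ^ #{i | y i ∈ A x}
      = ∑ _σ : ι → Bool, ∑ q, caught q := by
        rw [sum_const, card_univ, smul_eq_mul, Fintype.sum_prod_type]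
        simp [caught]
    _ = ∑ σ : ι → Bool, ∑ z, caught (splitAlong σ z) :=
        sum_congr rfl fun σ _ => ((splitAlong σ).sum_comp caught).symm
    _ = ∑ z, ∑ σ, caught (splitAlong σ z) := sum_comm
    _ ≤ ∑ _z : ι × Bool → X, M * 2 ^ Fintype.card ι := sum_le_sum fun z _ => hswap z
    _ = 2 ^ Fintype.card ι * (M * (Fintype.card (ι → X) * Fintype.card (ι → X))) := by
        rw [sum_const, card_univ, Fintype.card_congr (splitAlong fun _ => true),
          Fintype.card_prod, smul_eq_mul]
        ring

theorem exists_sample_forall_exists_mem {X : Type*} [Fintype X] [Nonempty X] [DecidableEq X]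
    {c m M : ℕ} {𝒜 : Finset (Finset X)} (hM : M * c ^ m < (c + 1) ^ m)
    (hdense : ∀ A ∈ 𝒜, Fintype.card X ≤ c * #A)
    (h𝒜 : ∀ z : Fin m × Bool → X, #(pullback z 𝒜) ≤ M) :
    ∃ x : Fin m → X, ∀ A ∈ 𝒜, ∃ i, x i ∈ A := by
  by_contra! hmissed
  choose A hA hmiss using hmissed
  set n := Fintype.card (Fin m → X) with hn
  have hlower (x : Fin m → X) :
      (c + 1) ^ m * n ≤ c ^ m * ∑ y : Fin m → X, 2 ^ #{i | y i ∈ A x} := by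
    rw [sum_two_pow_card_apply_mem, hn, Fintype.card_fun, Fintype.card_fin, ← mul_pow, ← mul_pow]
    exact Nat.pow_le_pow_left (by linarith [hdense _ (hA x)]) m
  have hpos : 0 < n * n := Nat.mul_pos Fintype.card_pos Fintype.card_pos
  refine hM.not_ge (Nat.le_of_mul_le_mul_right ?_ hpos)
  calc (c + 1) ^ m * (n * n)
      = ∑ _x : Fin m → X, (c + 1) ^ m * n := by
        rw [sum_const, card_univ, smul_eq_mul, mul_left_comm]
    _ ≤ c ^ m * ∑ x : Fin m → X, ∑ y : Fin m → X, 2 ^ #{i | y i ∈ A x} := by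
        rw [mul_sum]
        exact sum_le_sum fun x _ => hlower x
    _ ≤ c ^ m * (M * (n * n)) :=
        Nat.mul_le_mul_left _ (sum_sum_two_pow_card_apply_mem_le h𝒜 hA hmiss)
    _ = M * c ^ m * (n * n) := by ring

theorem exists_epsilon_net (D c : ℕ) :
    ∃ N : ℕ, ∀ {X : Type*} [Fintype X] [Nonempty X] [DecidableEq X] {𝒜 : Finset (Finset X)},
      𝒜.vcDim ≤ D → (∀ A ∈ 𝒜, Fintype.card X ≤ c * #A) →
      ∃ S : Finset X, #S ≤ N ∧ ∀ A ∈ 𝒜, ∃ t ∈ S, t ∈ A := by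
  obtain ⟨m, hm, hlt⟩ := exists_pos_mul_pow_mul_pow_lt_pow ((D + 1) * 2 ^ D) D c.lt_succ_self
  refine ⟨m, fun {X} _ _ _ {𝒜} hD hdense => ?_⟩
  have : NeZero m := ⟨hm.ne'⟩
  have htraces (z : Fin m × Bool → X) : #(pullback z 𝒜) ≤ (D + 1) * 2 ^ D * m ^ D :=
    (card_le_of_vcDim_le ((vcDim_pullback_le z 𝒜).trans hD)).trans_eq <| by
      rw [Fintype.card_prod, Fintype.card_fin, Fintype.card_bool, mul_pow]
      ring
  obtain ⟨x, hx⟩ := exists_sample_forall_exists_mem hlt hdense htraces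
  exact ⟨univ.image x, card_image_le.trans (by simp), by simpa using hx⟩

end EpsilonNet

theorem pq_theorem_general (k n : ℕ) :
    ∃ N : ℕ, ∀ {U : Type*} {𝓕 : Set (Set U)},
      (∀ A : Finset U, A.card ≤ k * n → (traceOn 𝓕 A).ncard < n ^ k) →
      ∀ V : Finset U, (∀ V' ⊆ V, V'.card ≤ k → ∃ F ∈ 𝓕, (V' : Set U) ⊆ F) →
      ∃ 𝓕' ⊆ 𝓕, 𝓕'.Finite ∧ 𝓕'.ncard ≤ N ∧ (V : Set U) ⊆ ⋃₀ 𝓕' := by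
  classical
  obtain ⟨c, hcover⟩ := exists_fractional_cover (n ^ k * (k * n))
  obtain ⟨N, hnet⟩ := exists_epsilon_net (2 ^ (k * n)) c
  refine ⟨N, fun {U 𝓕} h𝓕 V hV => ?_⟩
  have hpow : n ^ k ≤ 2 ^ (k * n) := by
    rw [mul_comm, pow_mul]
    exact Nat.pow_le_pow_left Nat.lt_two_pow_self.le k
  obtain ⟨T, hT, G, hG, hdense⟩ := hcover (exists_sum_le_mul_sum_filter_mem h𝓕 hV)
  have : NeZero T := ⟨hT.ne'⟩
  obtain ⟨S, hS, hmeet⟩ := hnet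
    (vcDim_dualSystem_le (fun A hA => (h𝓕 A hA).trans_le hpow) hG V)
    (by simpa [dualSystem] using hdense)
  refine ⟨G '' S, Set.image_subset_iff.2 fun t _ => hG t, S.finite_toSet.image G, ?_, ?_⟩
  · exact (Set.ncard_image_le S.finite_toSet).trans (by rwa [Set.ncard_coe_finset])
  · intro v hv
    obtain ⟨t, ht, hvt⟩ := hmeet _ (Finset.mem_image_of_mem _ hv)
    exact ⟨G t, Set.mem_image_of_mem G ht, by simpa using hvt⟩

theorem exists_ncard_traceOn_lt_pow {U : Type*} {𝓕 : Set (Set U)} {k : ℕ} {h : ℕ → ℝ}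
    (hshatter : ∀ (m : ℕ) (A : Finset U), A.card ≤ m → ((traceOn 𝓕 A).ncard : ℝ) ≤ h m)
    (hsmall : Tendsto (fun m : ℕ => h m / (m : ℝ) ^ k) atTop (nhds 0)) :
    ∃ n : ℕ, ∀ A : Finset U, A.card ≤ k * n → (traceOn 𝓕 A).ncard < n ^ k := by
  -- Evaluating `h` at `(k + 1) * n` rather than `k * n` includes the case `k = 0`.
  have hscale : Tendsto (fun n : ℕ => (k + 1) * n) atTop atTop :=
    tendsto_id.const_mul_atTop' k.succ_pos
  obtain ⟨n, hn, hn0⟩ := (((hsmall.comp hscale).eventually_lt_const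
    (show (0 : ℝ) < 1 / (k + 1) ^ k by positivity)).and (eventually_gt_atTop 0)).exists
  have hlt : h ((k + 1) * n) < (n : ℝ) ^ k := by
    rw [Function.comp_apply, div_lt_div_iff₀ (by positivity) (by positivity), one_mul] at hn
    push_cast at hn
    rw [mul_pow, mul_comm] at hn
    exact lt_of_mul_lt_mul_left hn (by positivity)
  refine ⟨n, fun A hA => ?_⟩
  have hA' : A.card ≤ (k + 1) * n := hA.trans (Nat.mul_le_mul_right n k.le_succ)
  exact_mod_cast (hshatter _ A hA').trans_lt hlt

/-- (p,q)-theorem, Matoušek form. Let `𝓕` be a family of subsets of `U`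
whose shatter function is bounded by `h : ℕ → ℝ` with `h m / m ^ k → 0`, and let `p ≥ k`.
Then there is `N` such that for every finite `V ⊆ U`: if every subset of `V` of size at
most `p` is contained in some member of `𝓕`, then some at most `N` members of `𝓕` cover `V`. -/
theorem pq_theorem {U : Type*} (𝓕 : Set (Set U)) (k : ℕ) (h : ℕ → ℝ)
    (hshatter : ∀ (m : ℕ) (A : Finset U), A.card ≤ m →
      ((((fun F => F ∩ (A : Set U)) '' 𝓕).ncard : ℝ) ≤ h m))
    (hsmall : Tendsto (fun m : ℕ => h m / (m : ℝ) ^ k) atTop (nhds 0))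
    (p : ℕ) (hp : k ≤ p) :
    ∃ N : ℕ, ∀ V : Finset U,
      (∀ V' ⊆ V, V'.card ≤ p → ∃ F ∈ 𝓕, (V' : Set U) ⊆ F) →
      ∃ 𝓕' ⊆ 𝓕, 𝓕'.Finite ∧ 𝓕'.ncard ≤ N ∧ (V : Set U) ⊆ ⋃₀ 𝓕' := by
  obtain ⟨n, hn⟩ := exists_ncard_traceOn_lt_pow hshatter hsmall
  obtain ⟨N, hN⟩ := pq_theorem_general k n
  exact ⟨N, fun V hV => hN hn V fun V' hsub hcard => hV V' hsub (hcard.trans hp)⟩
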